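/- Let λ, μ, ν ∈ P[n]. The map Γ : SVT^λ_{ν−λ}(μ) → SVCT^μ_{ν−μ}(λ), defined by Γ(T) := Ω(Y_T, M'_T) where (X_T,M_T)=Υ^{−1}(T), Y_T=(y_{i,j}) with y_{i,j}=N_{n−i+j,n−i}, N_{i,k} := λ_i + (number of occurrences of i in the top k rows of T), and M'_T := {(n+1−j,i−j) : (i,j)∈M_T}, is surjective: for every S ∈ SVCT^μ_{ν−μ}(λ) there exists T ∈ SVT^λ_{ν−λ}(μ) with Γ(T) = S. -/

import Mathlib

/-!
The preimage of `S` is written down explicitly. Let `f(j, v)` (`cntGE`) be the number of boxes in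
the `j`-th row from the bottom of `S` with an entry `≥ v`, and let `m(j, v)` (`Marked`) say that
some box of that row contains `v` together with a larger entry. Then `y_{n+1-v, j} = f(j, v)`,
with marks `(n+1-v, j)` for `m(j, v)`, is the marked Gelfand–Tsetlin pattern `Ω⁻¹(S)`
(`mem_contra_iff`), and the number of `v`'s in row `j` is `f(j, v) - f(j, v+1) + m(j, v)`
(`rowOcc_contra`).

With `N↑_{k,j} = mu k +` (number of `k`'s in rows `≥ j` of `S`), put
`x_{v,k} = N↑_{k, v-k+1} - f(v-k+1, k)` and mark `(v, k)` when `m(v-k, k)` holds. Two differences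
govern everything:
* `x_{v,k} - x_{v-1,k} = f(v-k, k+1) - f(v-k+1, k) - m(v-k, k)` (`preX_step`), nonnegative by
  column strictness of `S`, even in the presence of a mark (`cntGE_interlace`);
* `x_{v-1,k} - x_{v,k+1} = N↑_{k, v-k+1} - N↑_{k+1, v-k} + m(v-k, k)` (`preX_diag`). Since row
  words are weakly decreasing, `mu`-dominance of `S` says that the difference of the `N↑` is
  nonnegative (`Nup_le_of_lamDominant`), and marks sit where the diagonal step is positive.

So `(x, M)` is a marked pattern with bottom row `mu`, and `T = Υ(x, M)` is a set-valued tableau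
(`upsilon_isSSVT`). By the first difference, row `r` of `T` has `f(v-r, r+1) - f(v-r+1, r)`
letters `v` when `r < v`; this telescopes to `N_{v,k} = f(v-k, k+1)` for `k < v` (`Ndom_preT`),
and `N_{v,k} = nu v` for `k ≥ v` (`Ndom_preT_full`). Hence `Y_T` is the pattern of `S`, the weight
is correct, and `lam`-dominance of `T`, i.e. `N_{v+1,k+1} ≤ N_{v,k}` (`lamDominant_of_Ndom`), is
the monotonicity of `f` in `v` or that of `nu`.
-/

/-!
Common combinatorial definitions: partitions, (skew) set-valued tableaux,
contratableaux, reading words, dominance, Gelfand-Tsetlin patterns, and the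
maps Υ and Ω.  Partitions are encoded as functions `ℕ → ℕ` whose parts are
`lam 1, lam 2, …` (with `lam 0 = 0` as a normalization).  Tableaux are encoded
as functions `ℕ → ℕ → Finset ℕ` assigning to each box (row, column), both
indexed from `1`, its (finite) set of entries, with value `∅` outside the
shape. -/

/-- `lam` is a partition with at most `n` nonzero parts `lam 1 ≥ lam 2 ≥ ⋯`. -/
def IsPartition (n : ℕ) (lam : ℕ → ℕ) : Prop :=
  lam 0 = 0 ∧ (∀ i, 1 ≤ i → lam (i + 1) ≤ lam i) ∧ (∀ i, n < i → lam i = 0)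

/-- `|lam|`, the sum of the parts of a partition in `P[n]`. -/
def sumParts (n : ℕ) (lam : ℕ → ℕ) : ℕ := ∑ i ∈ Finset.Icc 1 n, lam i

/-- The boxes of the skew Young diagram `lam/mu` (rows indexed from the top,
starting at `1`; columns from the left, starting at `1`). -/
def SkewBox (lam mu : ℕ → ℕ) (i j : ℕ) : Prop :=
  1 ≤ i ∧ mu i < j ∧ j ≤ lam i

/-- The boxes of the straight Young diagram of `mu`. -/
def ShapeBox (mu : ℕ → ℕ) (i j : ℕ) : Prop :=
  1 ≤ i ∧ 1 ≤ j ∧ j ≤ mu i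

/-- A semi-standard set-valued tableau with entries in `[n] = {1, …, n}` on a
given set `box` of boxes (rows indexed from the top): every box carries a
nonempty subset of `[n]`, rows weakly increase from left to right, columns
strictly increase from top to bottom, and the filling vanishes off the shape. -/
def IsSSVT (n : ℕ) (box : ℕ → ℕ → Prop) (T : ℕ → ℕ → Finset ℕ) : Prop :=
  (∀ i j, box i j → (T i j).Nonempty) ∧
  (∀ i j, box i j → T i j ⊆ Finset.Icc 1 n) ∧
  (∀ i j, ¬ box i j → T i j = ∅) ∧
  (∀ i j, box i j → box i (j + 1) → ∀ a ∈ T i j, ∀ b ∈ T i (j + 1), a ≤ b) ∧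
  (∀ i j, box i j → box (i + 1) j → ∀ a ∈ T i j, ∀ b ∈ T (i + 1) j, a < b)

/-- The boxes of the rotated shape `C(lam)` (for `lam ∈ P[n]`): the `j`-th row
from the *bottom* (`1 ≤ j ≤ n`) consists of `lam j` right-justified boxes, in
columns `lam 1 - lam j + 1, …, lam 1`. -/
def ContraBox (n : ℕ) (lam : ℕ → ℕ) (j c : ℕ) : Prop :=
  1 ≤ j ∧ j ≤ n ∧ lam 1 - lam j < c ∧ c ≤ lam 1

/-- A set-valued contratableau of shape `lam` with entries in `[n]`: a
semi-standard set-valued tableau of shape `C(lam)`.  Here `T j c` is the box in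
the `j`-th row from the bottom and column `c`; "columns strictly increase from
top to bottom" says entries of row `j+1` (which lies above row `j`) are
strictly smaller than those below them in row `j`. -/
def IsSVCT (n : ℕ) (lam : ℕ → ℕ) (T : ℕ → ℕ → Finset ℕ) : Prop :=
  (∀ j c, ContraBox n lam j c → (T j c).Nonempty) ∧
  (∀ j c, ContraBox n lam j c → T j c ⊆ Finset.Icc 1 n) ∧
  (∀ j c, ¬ ContraBox n lam j c → T j c = ∅) ∧
  (∀ j c, ContraBox n lam j c → ContraBox n lam j (c + 1) →
    ∀ a ∈ T j c, ∀ b ∈ T j (c + 1), a ≤ b) ∧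
  (∀ j c, ContraBox n lam j c → ContraBox n lam (j + 1) c →
    ∀ a ∈ T (j + 1) c, ∀ b ∈ T j c, a < b)

/-- The entries of one cell, read in decreasing order. -/
def cellWord (S : Finset ℕ) : List ℕ := (S.sort (· ≤ ·)).reverse

/-- The row word: rows are read from top to bottom, each row from right to
left, the entries of each cell in decreasing order (reading over the rectangle
with `R` rows and `W` columns, which covers the shape; cells off the shape are
empty and contribute nothing). -/
def rowWordRect (R W : ℕ) (T : ℕ → ℕ → Finset ℕ) : List ℕ :=
  ((List.range R).map (fun i =>
    (((List.range W).reverse).map (fun j => cellWord (T (i + 1) (j + 1)))).flatten)).flatten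

/-- The column word: columns are read from rightmost to leftmost, each column
from top to bottom, the entries of each cell in decreasing order. -/
def colWordRect (R W : ℕ) (T : ℕ → ℕ → Finset ℕ) : List ℕ :=
  (((List.range W).reverse).map (fun j =>
    ((List.range R).map (fun i => cellWord (T (i + 1) (j + 1)))).flatten)).flatten

/-- The row word of a contratableau whose rows are indexed from the bottom
(`1, …, n`): rows are read from top to bottom (i.e. row `n` first), each row
from right to left, cell entries in decreasing order. -/
def contraRowWord (n W : ℕ) (T : ℕ → ℕ → Finset ℕ) : List ℕ :=
  (((List.range n).reverse).map (fun j =>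
    (((List.range W).reverse).map (fun c => cellWord (T (j + 1) (c + 1)))).flatten)).flatten

/-- A word is dominant if every prefix contains at least as many `i`'s as
`(i+1)`'s, for every `i ≥ 1`. -/
def Dominant (u : List ℕ) : Prop :=
  ∀ t i, 1 ≤ i → (u.take t).count (i + 1) ≤ (u.take t).count i

/-- The row word of the superstandard tableau `T_lam` of shape and weight
`lam` (its `i`-th row consists of `lam i` many `i`'s), for `lam ∈ P[n]`. -/
def superWord (n : ℕ) (lam : ℕ → ℕ) : List ℕ :=
  ((List.range n).map (fun i => List.replicate (lam (i + 1)) (i + 1))).flatten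

/-- A word `u` is `lam`-dominant if `r(T_lam) * u` is dominant. -/
def LamDominant (n : ℕ) (lam : ℕ → ℕ) (u : List ℕ) : Prop :=
  Dominant (superWord n lam ++ u)

/-- The number of occurrences of the entry `v` in row `r` of `T`
(columns `1, …, W`). -/
def rowOcc (W : ℕ) (T : ℕ → ℕ → Finset ℕ) (r v : ℕ) : ℕ :=
  ∑ c ∈ Finset.Icc 1 W, if v ∈ T r c then 1 else 0

/-- The number of occurrences of the entry `v` in `T` (the `v`-th coordinate
of the weight `wt T`), rows `1, …, R` and columns `1, …, W`. -/
def wtT (R W : ℕ) (T : ℕ → ℕ → Finset ℕ) (v : ℕ) : ℕ :=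
  ∑ r ∈ Finset.Icc 1 R, rowOcc W T r v

/-- The total number of entries `|T|` of a set-valued tableau. -/
def sizeT (R W : ℕ) (T : ℕ → ℕ → Finset ℕ) : ℕ :=
  ∑ r ∈ Finset.Icc 1 R, ∑ c ∈ Finset.Icc 1 W, (T r c).card

/-- A Gelfand-Tsetlin pattern of size `n`: a triangular array of integers
`x i j` (`1 ≤ j ≤ i ≤ n`) with `NE_{i,j} = x i j - x (i-1) j ≥ 0` and
`SE_{i,j} = x (i-1) j - x i (j+1) ≥ 0` for all `1 ≤ j < i ≤ n`, normalized to
vanish outside the triangle. -/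
def IsGT (n : ℕ) (x : ℕ → ℕ → ℤ) : Prop :=
  (∀ i j, 1 ≤ j → j < i → i ≤ n → x (i - 1) j ≤ x i j ∧ x i (j + 1) ≤ x (i - 1) j) ∧
  (∀ i j, ¬ (1 ≤ j ∧ j ≤ i ∧ i ≤ n) → x i j = 0)

/-- A GT pattern in `GT_ℤ(lam)`: bottom row equal to `lam`. -/
def IsGTZ (n : ℕ) (lam : ℕ → ℕ) (x : ℕ → ℕ → ℤ) : Prop :=
  IsGT n x ∧ ∀ j, 1 ≤ j → j ≤ n → x n j = (lam j : ℤ)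

/-- A valid set of marks on a GT pattern: `M ⊆ {(i,j) : 1 ≤ j < i ≤ n` and
`SE_{i,j}(x) > 0}`. -/
def MarksOK (n : ℕ) (x : ℕ → ℕ → ℤ) (M : Finset (ℕ × ℕ)) : Prop :=
  ∀ p ∈ M, 1 ≤ p.2 ∧ p.2 < p.1 ∧ p.1 ≤ n ∧ 0 < x (p.1 - 1) p.2 - x p.1 (p.2 + 1)

/-- A marked GT pattern in `MGT_ℤ(lam)`. -/
def IsMGTZ (n : ℕ) (lam : ℕ → ℕ) (x : ℕ → ℕ → ℤ) (M : Finset (ℕ × ℕ)) : Prop :=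
  IsGTZ n lam x ∧ MarksOK n x M

/-- The map `Υ` from marked GT patterns to set-valued tableaux, in closed form:
the entry `i` lies in the box in row `r`, column `c` iff `x_{i-1,r} < c ≤ x_{i,r}`
(the horizontal strip `x^{(i)}/x^{(i-1)}` is filled with `i`'s), or `(i,r) ∈ M`
and `c = x_{i-1,r}` (for a mark, `i` is added to the rightmost box of row `r`
of `X^{(i-1)}`, the box containing `i-1` there). -/
def Upsilon (n : ℕ) (x : ℕ → ℕ → ℤ) (M : Finset (ℕ × ℕ)) : ℕ → ℕ → Finset ℕ :=
  fun r c => (Finset.Icc 1 n).filter (fun i =>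
    (x (i - 1) r < (c : ℤ) ∧ (c : ℤ) ≤ x i r) ∨ ((i, r) ∈ M ∧ (c : ℤ) = x (i - 1) r))

/-- The map `Ω` from marked GT patterns to set-valued contratableaux of shape
`lam`, in closed form.  Rows are indexed from the bottom and the box in row `j`
and column `c` is the `d`-th box from the right where `d = lam 1 + 1 - c`.
The entry `v = n + 1 - i` lies there iff `y_{i-1,j} < d ≤ y_{i,j}` (the boxes
of `C(y^{(i)})/C(y^{(i-1)})` are filled with `n+1-i`), or `(i,j) ∈ M` and
`d = y_{i-1,j}` (for a mark, `n+1-i` is added to the leftmost box of row `j`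
of `Y^{(i-1)}`, the box containing `n+2-i` there). -/
def Omega (n : ℕ) (lam : ℕ → ℕ) (y : ℕ → ℕ → ℤ) (M : Finset (ℕ × ℕ)) : ℕ → ℕ → Finset ℕ :=
  fun j c => (Finset.Icc 1 n).filter (fun v =>
    (y (n - v) j < (lam 1 : ℤ) + 1 - (c : ℤ) ∧ (lam 1 : ℤ) + 1 - (c : ℤ) ≤ y (n + 1 - v) j) ∨
      ((n + 1 - v, j) ∈ M ∧ (lam 1 : ℤ) + 1 - (c : ℤ) = y (n - v) j))

/-- `N_{i,k} = lam i + (number of occurrences of i in the top k rows of T)`. -/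
def Ndom (W : ℕ) (lam : ℕ → ℕ) (T : ℕ → ℕ → Finset ℕ) (i k : ℕ) : ℕ :=
  lam i + ∑ r ∈ Finset.Icc 1 k, rowOcc W T r i

/-- `N↑_{i,k} = mu i + (number of occurrences of i in rows k, k+1, …, n from
the bottom of a contratableau)`. -/
def Nup (n W : ℕ) (mu : ℕ → ℕ) (T : ℕ → ℕ → Finset ℕ) (i k : ℕ) : ℕ :=
  mu i + ∑ r ∈ Finset.Icc k n, rowOcc W T r i

/-- The GT pattern `Y_T` with entries `y_{i,j} = N_{n-i+j, n-i}` (normalized to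
`0` outside the triangle). -/
def Ypat (n W : ℕ) (lam : ℕ → ℕ) (T : ℕ → ℕ → Finset ℕ) : ℕ → ℕ → ℤ :=
  fun i j => if 1 ≤ j ∧ j ≤ i ∧ i ≤ n then (Ndom W lam T (n - i + j) (n - i) : ℤ) else 0

/-- The transported mark set `M' = {(n+1-j, i-j) : (i,j) ∈ M}`. -/
def MarksOf (n : ℕ) (M : Finset (ℕ × ℕ)) : Finset (ℕ × ℕ) :=
  M.image (fun p => (n + 1 - p.2, p.1 - p.2))

/-- The stable Grothendieck polynomial `G_lam(x_1, …, x_n)`, a polynomial in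
variables `X 1, …, X n`. -/
noncomputable def Groth (n : ℕ) (lam : ℕ → ℕ) : MvPolynomial ℕ ℤ :=
  ∑ᶠ T ∈ {T : ℕ → ℕ → Finset ℕ | IsSSVT n (ShapeBox lam) T},
    (-1 : MvPolynomial ℕ ℤ) ^ (sizeT n (lam 1) T - sumParts n lam) *
      ∏ k ∈ Finset.Icc 1 n, MvPolynomial.X k ^ wtT n (lam 1) T k

/-! ### Words and dominance -/

lemma count_cellWord (A : Finset ℕ) (v : ℕ) :
    (cellWord A).count v = if v ∈ A then 1 else 0 := by
  unfold cellWord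
  rw [List.count_reverse, List.Nodup.count (Finset.sort_nodup _ _)]
  simp

lemma pairwise_cellWord (A : Finset ℕ) : (cellWord A).Pairwise (fun a b => b ≤ a) := by
  unfold cellWord
  rw [List.pairwise_reverse]
  exact Finset.pairwise_sort A (· ≤ ·)

/-- The word of a single row `r`: cells from right to left, each cell decreasing. -/
def rowW (W : ℕ) (T : ℕ → ℕ → Finset ℕ) (r : ℕ) : List ℕ :=
  (((List.range W).reverse).map (fun c => cellWord (T r (c + 1)))).flatten

lemma rowW_succ (W : ℕ) (T : ℕ → ℕ → Finset ℕ) (r : ℕ) :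
    rowW (W + 1) T r = cellWord (T r (W + 1)) ++ rowW W T r := by
  simp [rowW, List.range_succ]

lemma count_rowW (W : ℕ) (T : ℕ → ℕ → Finset ℕ) (r v : ℕ) :
    (rowW W T r).count v = rowOcc W T r v := by
  induction W with
  | zero => simp [rowW, rowOcc]
  | succ W ih =>
    rw [rowW_succ, List.count_append, ih, count_cellWord, rowOcc, rowOcc,
      Finset.sum_Icc_succ_top (by omega), add_comm]

lemma mem_rowW (W : ℕ) (T : ℕ → ℕ → Finset ℕ) (r a : ℕ) :
    a ∈ rowW W T r ↔ ∃ c, 1 ≤ c ∧ c ≤ W ∧ a ∈ T r c := by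
  induction W with
  | zero => simp [rowW]
  | succ W ih =>
    rw [rowW_succ, List.mem_append, ih]
    have : a ∈ cellWord (T r (W + 1)) ↔ a ∈ T r (W + 1) := by simp [cellWord]
    rw [this]
    constructor
    · rintro (h | ⟨c, h1, h2, h3⟩)
      · exact ⟨W + 1, by omega, le_rfl, h⟩
      · exact ⟨c, h1, by omega, h3⟩
    · rintro ⟨c, h1, h2, h3⟩
      rcases Nat.lt_or_ge W c with h | h
      · obtain rfl : c = W + 1 := by omega
        exact Or.inl h3
      · exact Or.inr ⟨c, h1, h, h3⟩

/-- The row word of a weakly increasing row is weakly decreasing. -/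
lemma pairwise_rowW (W : ℕ) (T : ℕ → ℕ → Finset ℕ) (r : ℕ)
    (h : ∀ c c', 1 ≤ c → c < c' → c' ≤ W → ∀ a ∈ T r c, ∀ b ∈ T r c', a ≤ b) :
    (rowW W T r).Pairwise (fun a b => b ≤ a) := by
  induction W with
  | zero => simp [rowW]
  | succ W ih =>
    rw [rowW_succ, List.pairwise_append]
    refine ⟨pairwise_cellWord _,
      ih (fun c c' h1 h2 h3 => h c c' h1 h2 (by omega)), fun b hb a ha => ?_⟩
    obtain ⟨c, h1, h2, h3⟩ := (mem_rowW _ _ _ _).1 ha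
    have hb' : b ∈ T r (W + 1) := by simpa [cellWord] using hb
    exact h c (W + 1) h1 (by omega) le_rfl a h3 b hb'

lemma count_superWord (n : ℕ) (lam : ℕ → ℕ) (v : ℕ) :
    (superWord n lam).count v = if 1 ≤ v ∧ v ≤ n then lam v else 0 := by
  induction n with
  | zero => simp [superWord]; intros; omega
  | succ n ih =>
    have : superWord (n + 1) lam = superWord n lam ++ List.replicate (lam (n + 1)) (n + 1) := by
      simp [superWord, List.range_succ]
    rw [this, List.count_append, ih, List.count_replicate]
    by_cases h : n + 1 = v
    · subst h; simp
    · have : (1 ≤ v ∧ v ≤ n + 1) ↔ (1 ≤ v ∧ v ≤ n) := by omega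
      simp [h, this]

lemma count_superWord' {n : ℕ} {lam : ℕ → ℕ} (h : IsPartition n lam) (v : ℕ) :
    (superWord n lam).count v = lam v := by
  rw [count_superWord]
  split_ifs with h1
  · rfl
  · rcases Nat.eq_zero_or_pos v with h2 | h2
    · rw [h2, h.1]
    · exact (h.2.2 v (by omega)).symm

/-- Appending a word `w` to a dominant word `u` keeps dominance as soon as the letters `i + 1` of
`u * w` are bounded by the letters `i` of `u` alone. For weakly decreasing `w` this is also
necessary, see `Dominant.count_le`. -/
lemma dominant_append {u w : List ℕ} (hu : Dominant u)
    (h : ∀ i, 1 ≤ i → u.count (i + 1) + w.count (i + 1) ≤ u.count i) : Dominant (u ++ w) := by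
  intro t i hi
  rw [List.take_append]
  rcases Nat.le_total t u.length with ht | ht
  · rw [Nat.sub_eq_zero_of_le ht]
    simpa using hu t i hi
  · rw [List.take_of_length_le ht, List.count_append, List.count_append]
    have h1 := (List.take_sublist (t - u.length) w).count_le (i + 1)
    have h2 := h i hi
    omega

/-- Obtained by cutting a dominant word inside its weakly decreasing factor `w` just before the
first letter `≤ i`. -/
lemma Dominant.count_le {u w z : List ℕ} (hd : Dominant (u ++ (w ++ z)))
    (hw : w.Pairwise (fun a b => b ≤ a)) {i : ℕ} (hi : 1 ≤ i) :
    u.count (i + 1) + w.count (i + 1) ≤ u.count i := by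
  obtain ⟨p, q, hpq, hp, hq⟩ : ∃ p q, w = p ++ q ∧ (∀ a ∈ p, i < a) ∧ (∀ a ∈ q, a ≤ i) := by
    clear hd
    induction w with
    | nil => exact ⟨[], [], by simp⟩
    | cons a w ih =>
      rw [List.pairwise_cons] at hw
      rcases Nat.lt_or_ge i a with h | h
      · obtain ⟨p, q, h1, h2, h3⟩ := ih hw.2
        exact ⟨a :: p, q, by simp [h1], by simpa [h] using h2, h3⟩
      · refine ⟨[], a :: w, rfl, by simp, ?_⟩
        intro b hb
        rcases List.mem_cons.1 hb with rfl | hb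
        · exact h
        · exact (hw.1 b hb).trans h
  have h := hd (u ++ p).length i hi
  have e : u ++ (w ++ z) = (u ++ p) ++ (q ++ z) := by simp [hpq]
  rw [e, List.take_left, List.count_append, List.count_append] at h
  have h1 : p.count i = 0 := List.count_eq_zero.2 fun hm => lt_irrefl _ (hp i hm)
  have h2 : q.count (i + 1) = 0 := List.count_eq_zero.2 fun hm => by have := hq _ hm; omega
  rw [hpq, List.count_append]
  omega

lemma dominant_superWord {n : ℕ} {lam : ℕ → ℕ} (h : ∀ i, 1 ≤ i → lam (i + 1) ≤ lam i) :
    Dominant (superWord n lam) := by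
  induction n with
  | zero => intro t i _; simp [superWord]
  | succ n ih =>
    have : superWord (n + 1) lam = superWord n lam ++ List.replicate (lam (n + 1)) (n + 1) := by
      simp [superWord, List.range_succ]
    rw [this]
    refine dominant_append ih fun i hi => ?_
    rw [count_superWord, count_superWord, List.count_replicate]
    have := h i hi
    by_cases h1 : n = i
    · subst h1; simp; split_ifs; omega
    · have : ¬ (n + 1 == i + 1) = true := by simpa using h1
      simp only [this]
      split_ifs <;> first | omega | simp_all

lemma count_rowWordRect (R W : ℕ) (T : ℕ → ℕ → Finset ℕ) (v : ℕ) :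
    (rowWordRect R W T).count v = ∑ r ∈ Finset.Icc 1 R, rowOcc W T r v := by
  induction R with
  | zero => simp [rowWordRect]
  | succ R ih =>
    have : rowWordRect (R + 1) W T = rowWordRect R W T ++ rowW W T (R + 1) := by
      simp [rowWordRect, rowW, List.range_succ]
    rw [this, List.count_append, ih, count_rowW, Finset.sum_Icc_succ_top (by omega)]

/-- The inequalities `N_{i+1,k+1} ≤ N_{i,k}` imply that a tableau is `lam`-dominant. -/
lemma lamDominant_of_Ndom {n W : ℕ} {lam : ℕ → ℕ} (hlam : IsPartition n lam)
    (T : ℕ → ℕ → Finset ℕ) (R : ℕ)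
    (h : ∀ i k, 1 ≤ i → k < R → Ndom W lam T (i + 1) (k + 1) ≤ Ndom W lam T i k) :
    LamDominant n lam (rowWordRect R W T) := by
  unfold LamDominant
  induction R with
  | zero => simpa [rowWordRect] using dominant_superWord hlam.2.1
  | succ R ih =>
    have : rowWordRect (R + 1) W T = rowWordRect R W T ++ rowW W T (R + 1) := by
      simp [rowWordRect, rowW, List.range_succ]
    rw [this, ← List.append_assoc]
    refine dominant_append (ih fun i k h1 h2 => h i k h1 (by omega)) fun i hi => ?_
    have := h i R hi (by omega)
    simp only [Ndom] at this
    rw [Finset.sum_Icc_succ_top (by omega)] at this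
    simp only [List.count_append, count_superWord' hlam, count_rowWordRect, count_rowW]
    omega

lemma count_upper (W : ℕ) (S : ℕ → ℕ → Finset ℕ) (k m v : ℕ) :
    (((List.range' k m).reverse.map (fun j => rowW W S (j + 1))).flatten).count v
      = ∑ r ∈ Finset.Icc (k + 1) (k + m), rowOcc W S r v := by
  induction m with
  | zero => simp
  | succ m ih =>
    rw [List.range'_concat, ← add_assoc, Finset.sum_Icc_succ_top (by omega), ← ih]
    simp [count_rowW, add_comm]

/-- A `mu`-dominant contratableau satisfies `N↑_{k+1,j} ≤ N↑_{k,j+1}`. -/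
lemma Nup_le_of_lamDominant {n W : ℕ} {mu : ℕ → ℕ} (hmu : IsPartition n mu)
    (S : ℕ → ℕ → Finset ℕ)
    (hrow : ∀ r c c', 1 ≤ c → c < c' → c' ≤ W → ∀ a ∈ S r c, ∀ b ∈ S r c', a ≤ b)
    (hd : LamDominant n mu (contraRowWord n W S)) (k j : ℕ) (hk : 1 ≤ k) (hj : 1 ≤ j)
    (hjn : j ≤ n) : Nup n W mu S (k + 1) j ≤ Nup n W mu S k (j + 1) := by
  obtain ⟨j, rfl⟩ : ∃ j', j = j' + 1 := ⟨j - 1, by omega⟩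
  obtain ⟨m, rfl⟩ : ∃ m, n = j + 1 + m := ⟨n - (j + 1), by omega⟩
  have e : contraRowWord (j + 1 + m) W S =
      ((List.range' (j + 1) m).reverse.map (fun j => rowW W S (j + 1))).flatten ++
        (rowW W S (j + 1) ++ contraRowWord j W S) := by
    have : List.range (j + 1 + m) = List.range j ++ ([j] ++ List.range' (j + 1) m) := by
      rw [List.range_add, List.range_succ, List.range'_eq_map_range]
      simp
    unfold contraRowWord
    rw [this]
    simp [rowW]
  unfold LamDominant at hd
  rw [e, ← List.append_assoc] at hd
  have := hd.count_le (pairwise_rowW W S _ (hrow _)) hk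
  simp only [List.count_append, count_superWord' hmu, count_upper, count_rowW] at this
  unfold Nup
  rw [← Finset.add_sum_Ioc_eq_sum_Icc (by omega : j + 1 ≤ j + 1 + m)]
  have e2 : Finset.Ioc (j + 1) (j + 1 + m) = Finset.Icc (j + 1 + 1) (j + 1 + m) := by
    ext; simp
  rw [e2]
  omega

/-! ### The marked pattern of a contratableau -/

/-- The number of boxes in row `j` of `S` having an entry `≥ v`; in the Gelfand–Tsetlin pattern
of the contratableau `S` this is the entry `y_{n+1-v, j}`. -/
def cntGE (W : ℕ) (S : ℕ → ℕ → Finset ℕ) (j v : ℕ) : ℕ :=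
  ((Finset.Icc 1 W).filter (fun c => ∃ a ∈ S j c, v ≤ a)).card

/-- Row `j` of `S` has a box containing `v` as a non-maximal entry, i.e. `(n+1-v, j)` is a mark
of the pattern of `S`. -/
def Marked (W : ℕ) (S : ℕ → ℕ → Finset ℕ) (j v : ℕ) : Prop :=
  ∃ c, 1 ≤ c ∧ c ≤ W ∧ v ∈ S j c ∧ ∃ a ∈ S j c, v + 1 ≤ a

open Classical in
/-- The indicator of `Marked`. -/
noncomputable def markInd (W : ℕ) (S : ℕ → ℕ → Finset ℕ) (j v : ℕ) : ℕ :=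
  if Marked W S j v then 1 else 0

lemma mem_contraBox {n : ℕ} {lam : ℕ → ℕ} {S : ℕ → ℕ → Finset ℕ} (hS : IsSVCT n lam S)
    {j c a : ℕ} (ha : a ∈ S j c) : ContraBox n lam j c := by
  by_contra h
  rw [hS.2.2.1 j c h] at ha
  simp at ha

lemma contra_row {n : ℕ} {lam : ℕ → ℕ} {S : ℕ → ℕ → Finset ℕ} (hS : IsSVCT n lam S)
    (j c c' : ℕ) (hc : c < c') (hc' : c' ≤ lam 1) :
    ∀ a ∈ S j c, ∀ b ∈ S j c', a ≤ b := by
  induction c', hc using Nat.le_induction with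
  | base =>
    intro a ha b hb
    exact hS.2.2.2.1 j c (mem_contraBox hS ha) (mem_contraBox hS hb) a ha b hb
  | succ d hd ih =>
    intro a ha b hb
    have h1 := mem_contraBox hS ha
    have hbox : ContraBox n lam j d := by
      obtain ⟨h1, h2, h3, h4⟩ := h1
      exact ⟨h1, h2, by omega, by omega⟩
    obtain ⟨e, he⟩ := hS.1 j d hbox
    exact (ih (by omega) a ha e he).trans
      (hS.2.2.2.1 j d hbox (mem_contraBox hS hb) e he b hb)

lemma contra_col {n : ℕ} {lam : ℕ → ℕ} (hlam : IsPartition n lam) {S : ℕ → ℕ → Finset ℕ}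
    (hS : IsSVCT n lam S) {j c a : ℕ} (hj : 1 ≤ j) (ha : a ∈ S (j + 1) c) :
    (S j c).Nonempty ∧ ∀ b ∈ S j c, a < b := by
  have h1 := mem_contraBox hS ha
  have h2 : ContraBox n lam j c := by
    obtain ⟨h1, h2, h3, h4⟩ := h1
    have := hlam.2.1 j hj
    exact ⟨hj, by omega, by omega, by omega⟩
  exact ⟨hS.1 j c h2, fun b hb => hS.2.2.2.2 j c h2 h1 a ha b hb⟩

/-- Column strictness bounds the entries of the `j`-th row from the bottom by `n + 1 - j`. -/
lemma contra_bound {n : ℕ} {lam : ℕ → ℕ} (hlam : IsPartition n lam) {S : ℕ → ℕ → Finset ℕ}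
    (hS : IsSVCT n lam S) {j c a : ℕ} (ha : a ∈ S j c) : a + j ≤ n + 1 := by
  have hj : 1 ≤ j := (mem_contraBox hS ha).1
  induction j, hj using Nat.le_induction generalizing a with
  | base =>
    have := hS.2.1 _ _ (mem_contraBox hS ha) ha
    simp at this
    omega
  | succ j hj ih =>
    obtain ⟨⟨b, hb⟩, h⟩ := contra_col hlam hS hj ha
    have := h b hb
    have := ih hb
    omega

/-- An up-closed subset of `[1, W]` with `m` elements is `[W + 1 - m, W]`. -/
lemma upset_iff (W : ℕ) (P : ℕ → Prop) [DecidablePred P]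
    (h : ∀ c c', 1 ≤ c → c < c' → c' ≤ W → P c → P c') (c : ℕ) (h1 : 1 ≤ c) (h2 : c ≤ W) :
    P c ↔ W + 1 - c ≤ ((Finset.Icc 1 W).filter P).card := by
  constructor
  · intro hP
    have : Finset.Icc c W ⊆ (Finset.Icc 1 W).filter P := by
      intro d hd
      simp only [Finset.mem_Icc, Finset.mem_filter] at hd ⊢
      refine ⟨by omega, ?_⟩
      rcases hd.1.eq_or_lt with e | e
      · exact e ▸ hP
      · exact h c d h1 e hd.2 hP
    simpa using Finset.card_le_card this
  · intro hc
    by_contra hP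
    have : (Finset.Icc 1 W).filter P ⊆ Finset.Icc (c + 1) W := by
      intro d hd
      simp only [Finset.mem_Icc, Finset.mem_filter] at hd ⊢
      refine ⟨?_, hd.1.2⟩
      by_contra hlt
      rcases Nat.lt_or_ge d c with e | e
      · exact hP (h d c hd.1.1 e h2 hd.2)
      · exact hP ((by omega : d = c) ▸ hd.2)
    have := Finset.card_le_card this
    simp at this
    omega

section contra

variable {n : ℕ} {lam : ℕ → ℕ} {S : ℕ → ℕ → Finset ℕ}

lemma cntGE_iff (hS : IsSVCT n lam S) (j v c : ℕ) (h1 : 1 ≤ c) (h2 : c ≤ lam 1) :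
    (∃ a ∈ S j c, v ≤ a) ↔ lam 1 + 1 - c ≤ cntGE (lam 1) S j v := by
  unfold cntGE
  convert upset_iff (lam 1) (fun c => ∃ a ∈ S j c, v ≤ a) ?_ c h1 h2
  rintro c c' hc hlt hc' ⟨a, ha, hva⟩
  have hb := mem_contraBox hS ha
  have hb' : ContraBox n lam j c' := by
    obtain ⟨h1, h2, h3, h4⟩ := hb
    exact ⟨h1, h2, by omega, hc'⟩
  obtain ⟨b, hb⟩ := hS.1 j c' hb'
  exact ⟨b, hb, hva.trans (contra_row hS j c c' hlt hc' a ha b hb)⟩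

lemma cntGE_le (W : ℕ) (j v : ℕ) : cntGE W S j v ≤ W := by
  unfold cntGE
  exact (Finset.card_filter_le _ _).trans (by simp)

lemma cntGE_succ_le (W : ℕ) (j v : ℕ) : cntGE W S j (v + 1) ≤ cntGE W S j v := by
  unfold cntGE
  refine Finset.card_le_card fun c => ?_
  simp only [Finset.mem_filter]
  rintro ⟨h, a, ha, hv⟩
  exact ⟨h, a, ha, by omega⟩

lemma cntGE_eq_zero (hlam : IsPartition n lam) (hS : IsSVCT n lam S) (j v : ℕ)
    (h : n + 1 < v + j) : cntGE (lam 1) S j v = 0 := by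
  unfold cntGE
  rw [Finset.card_eq_zero, Finset.filter_eq_empty_iff]
  rintro c - ⟨a, ha, hv⟩
  have := contra_bound hlam hS ha
  omega

lemma cntGE_row_zero (hS : IsSVCT n lam S) (v : ℕ) : cntGE (lam 1) S 0 v = 0 := by
  unfold cntGE
  rw [Finset.card_eq_zero, Finset.filter_eq_empty_iff]
  rintro c - ⟨a, ha, hv⟩
  have := (mem_contraBox hS ha).1
  omega

lemma part_le_one (hlam : IsPartition n lam) (j : ℕ) (hj : 1 ≤ j) : lam j ≤ lam 1 := by
  induction j, hj using Nat.le_induction with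
  | base => exact le_rfl
  | succ j hj ih => exact (hlam.2.1 j hj).trans ih

lemma cntGE_one (hlam : IsPartition n lam) (hS : IsSVCT n lam S) (j : ℕ) (hj : 1 ≤ j)
    (hjn : j ≤ n) : cntGE (lam 1) S j 1 = lam j := by
  unfold cntGE
  have hle := part_le_one hlam j hj
  have : (Finset.Icc 1 (lam 1)).filter (fun c => ∃ a ∈ S j c, 1 ≤ a)
      = Finset.Ioc (lam 1 - lam j) (lam 1) := by
    ext c
    simp only [Finset.mem_filter, Finset.mem_Icc, Finset.mem_Ioc]
    constructor
    · rintro ⟨h, a, ha, -⟩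
      exact (mem_contraBox hS ha).2.2
    · rintro ⟨h1, h2⟩
      have hb : ContraBox n lam j c := ⟨hj, hjn, h1, h2⟩
      obtain ⟨a, ha⟩ := hS.1 j c hb
      have := hS.2.1 j c hb ha
      simp at this
      exact ⟨⟨by omega, h2⟩, a, ha, this.1⟩
  rw [this]
  simp
  omega

/-- Column strictness of `S`, as an interlacing inequality; a mark makes it strict. -/
lemma cntGE_interlace (hlam : IsPartition n lam) (hS : IsSVCT n lam S) (j v : ℕ) (hj : 1 ≤ j) :
    cntGE (lam 1) S (j + 1) v + markInd (lam 1) S j v ≤ cntGE (lam 1) S j (v + 1) := by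
  have himp : ∀ c, (∃ a ∈ S (j + 1) c, v ≤ a) → ∃ a ∈ S j c, v + 1 ≤ a := by
    rintro c ⟨a, ha, hv⟩
    obtain ⟨⟨b, hb⟩, hlt⟩ := contra_col hlam hS hj ha
    have := hlt b hb
    exact ⟨b, hb, by omega⟩
  unfold markInd cntGE
  split_ifs with hm
  · obtain ⟨c, h1, h2, hv, ha⟩ := hm
    refine Nat.succ_le_of_lt (Finset.card_lt_card ((Finset.ssubset_iff_of_subset
      (Finset.monotone_filter_right _ fun c _ => himp c)).2 ⟨c, ?_, ?_⟩))
    · simp only [Finset.mem_filter, Finset.mem_Icc]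
      exact ⟨⟨h1, h2⟩, ha⟩
    · simp only [Finset.mem_filter, not_and]
      rintro - ⟨b, hb, hvb⟩
      have := (contra_col hlam hS hj hb).2 v hv
      omega
  · rw [add_zero]
    exact Finset.card_le_card (Finset.monotone_filter_right _ fun c _ => himp c)

/-- A box of row `j` containing `v` non-maximally is unique: it is the leftmost one with an
entry exceeding `v`. -/
lemma marked_col (hS : IsSVCT n lam S) {j v c : ℕ} (h1 : 1 ≤ c) (h2 : c ≤ lam 1)
    (hv : v ∈ S j c) (ha : ∃ a ∈ S j c, v + 1 ≤ a) :
    lam 1 + 1 - c = cntGE (lam 1) S j (v + 1) := by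
  refine le_antisymm ((cntGE_iff hS j (v + 1) c h1 h2).1 ha) ?_
  by_contra hlt
  have h3 := cntGE_le (S := S) (lam 1) j (v + 1)
  have hc : 1 ≤ c - 1 := by omega
  obtain ⟨a, ha, hva⟩ := (cntGE_iff hS j (v + 1) (c - 1) hc (by omega)).2 (by omega)
  have := contra_row hS j (c - 1) c (by omega) h2 a ha v hv
  omega

lemma rowOcc_contra (hS : IsSVCT n lam S) (j v : ℕ) :
    cntGE (lam 1) S j (v + 1) + rowOcc (lam 1) S j v
      = cntGE (lam 1) S j v + markInd (lam 1) S j v := by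
  set A := (Finset.Icc 1 (lam 1)).filter (fun c => ∃ a ∈ S j c, v + 1 ≤ a) with hA
  set B := (Finset.Icc 1 (lam 1)).filter (fun c => v ∈ S j c) with hB
  have hAB : A ∪ B = (Finset.Icc 1 (lam 1)).filter (fun c => ∃ a ∈ S j c, v ≤ a) := by
    rw [hA, hB, ← Finset.filter_or]
    refine Finset.filter_congr fun c _ => ?_
    constructor
    · rintro (⟨a, ha, h⟩ | h)
      · exact ⟨a, ha, by omega⟩
      · exact ⟨v, h, le_rfl⟩
    · rintro ⟨a, ha, h⟩
      rcases h.eq_or_lt with e | e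
      · exact Or.inr (e ▸ ha)
      · exact Or.inl ⟨a, ha, e⟩
  have hocc : rowOcc (lam 1) S j v = B.card := by
    rw [hB, Finset.card_filter]; rfl
  have hI : (A ∩ B).card = markInd (lam 1) S j v := by
    unfold markInd
    split_ifs with hm
    · obtain ⟨c, h1, h2, hv, ha⟩ := hm
      rw [Finset.card_eq_one]
      refine ⟨c, ?_⟩
      ext d
      simp only [hA, hB, Finset.mem_inter, Finset.mem_filter, Finset.mem_Icc,
        Finset.mem_singleton]
      constructor
      · rintro ⟨⟨⟨h3, h4⟩, ha'⟩, -, hv'⟩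
        have e1 := marked_col hS h1 h2 hv ha
        have e2 := marked_col hS h3 h4 hv' ha'
        omega
      · rintro rfl
        exact ⟨⟨⟨h1, h2⟩, ha⟩, ⟨h1, h2⟩, hv⟩
    · rw [Finset.card_eq_zero, Finset.eq_empty_iff_forall_notMem]
      intro c hc
      simp only [hA, hB, Finset.mem_inter, Finset.mem_filter, Finset.mem_Icc] at hc
      exact hm ⟨c, hc.1.1.1, hc.1.1.2, hc.2.2, hc.1.2⟩
  have := Finset.card_union_add_card_inter A B
  rw [hAB, hI, ← hocc] at this
  unfold cntGE
  rw [← hA]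
  omega

/-- Membership in the boxes of `S` read off from its marked pattern. -/
lemma mem_contra_iff (hS : IsSVCT n lam S) (j v c : ℕ) (h1 : 1 ≤ c) (h2 : c ≤ lam 1) :
    v ∈ S j c ↔ (cntGE (lam 1) S j (v + 1) < lam 1 + 1 - c ∧
      lam 1 + 1 - c ≤ cntGE (lam 1) S j v) ∨
      (Marked (lam 1) S j v ∧ lam 1 + 1 - c = cntGE (lam 1) S j (v + 1)) := by
  constructor
  · intro hv
    by_cases ha : ∃ a ∈ S j c, v + 1 ≤ a
    · exact Or.inr ⟨⟨c, h1, h2, hv, ha⟩, marked_col hS h1 h2 hv ha⟩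
    · refine Or.inl ⟨?_, (cntGE_iff hS j v c h1 h2).1 ⟨v, hv, le_rfl⟩⟩
      rw [cntGE_iff hS j (v + 1) c h1 h2] at ha
      omega
  · rintro (⟨h3, h4⟩ | ⟨⟨d, h3, h4, hv, ha⟩, h5⟩)
    · obtain ⟨a, ha, hva⟩ := (cntGE_iff hS j v c h1 h2).2 h4
      have hn : ¬ ∃ a ∈ S j c, v + 1 ≤ a := by
        rw [cntGE_iff hS j (v + 1) c h1 h2]
        omega
      obtain rfl : a = v := by
        by_contra hne
        exact hn ⟨a, ha, by omega⟩
      exact ha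
    · have := marked_col hS h3 h4 hv ha
      obtain rfl : c = d := by omega
      exact hv

lemma marked_pos (hS : IsSVCT n lam S) {j v : ℕ} (hm : Marked (lam 1) S j v) :
    0 < cntGE (lam 1) S j (v + 1) := by
  obtain ⟨c, h1, h2, hv, ha⟩ := hm
  have := marked_col hS h1 h2 hv ha
  omega

lemma marked_bound (hlam : IsPartition n lam) (hS : IsSVCT n lam S) {j v : ℕ}
    (hm : Marked (lam 1) S j v) : 1 ≤ j ∧ 1 ≤ v ∧ v + j ≤ n := by
  obtain ⟨c, h1, h2, hv, a, ha, hva⟩ := hm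
  have hb := mem_contraBox hS ha
  have := contra_bound hlam hS ha
  have h3 := hS.2.1 j c hb hv
  simp at h3
  exact ⟨hb.1, h3.1, by omega⟩

end contra

/-! ### The tableau of a marked Gelfand–Tsetlin pattern -/

section upsilon

variable {n : ℕ} {mu : ℕ → ℕ} {x : ℕ → ℕ → ℤ} {M : Finset (ℕ × ℕ)}

lemma gt_nonneg (hx : IsGTZ n mu x) (i j : ℕ) : 0 ≤ x i j := by
  by_cases h : 1 ≤ j ∧ j ≤ i ∧ i ≤ n
  · obtain ⟨h1, h2, h3⟩ := h
    -- descend along the diagonal `x i j ≥ x (i + 1) (j + 1) ≥ ⋯` to the bottom row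
    obtain ⟨m, hm⟩ : ∃ m, n = i + m := ⟨n - i, by omega⟩
    induction m generalizing i j with
    | zero =>
      have := hx.2 j h1 (by omega)
      rw [show i = n by omega, this]
      positivity
    | succ m ih =>
      have h4 := ih (i + 1) (j + 1) (by omega) (by omega) (by omega) (by omega)
      have h5 := (hx.1.1 (i + 1) j h1 (by omega) (by omega)).2
      simp only [Nat.add_sub_cancel] at h5
      omega
  · rw [hx.1.2 i j h]

lemma gt_mono (hx : IsGTZ n mu x) (r : ℕ) {i i' : ℕ} (h : i ≤ i') (hn : i' ≤ n) :
    x i r ≤ x i' r := by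
  induction i', h using Nat.le_induction with
  | base => exact le_rfl
  | succ m hm ih =>
    refine (ih (by omega)).trans ?_
    by_cases hr : 1 ≤ r ∧ r < m + 1
    · simpa using (hx.1.1 (m + 1) r hr.1 hr.2 hn).1
    · rw [hx.1.2 m r (by omega)]
      exact gt_nonneg hx _ _

lemma gt_le (hx : IsGTZ n mu x) {i r : ℕ} (hi : i ≤ n) : x i r ≤ mu r := by
  by_cases hr : 1 ≤ r ∧ r ≤ n
  · rw [← hx.2 r hr.1 hr.2]
    exact gt_mono hx r hi le_rfl
  · rw [hx.1.2 i r (by omega)]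
    positivity

lemma mem_upsilon {r c i : ℕ} : i ∈ Upsilon n x M r c ↔ (1 ≤ i ∧ i ≤ n) ∧
    ((x (i - 1) r < (c : ℤ) ∧ (c : ℤ) ≤ x i r) ∨ ((i, r) ∈ M ∧ (c : ℤ) = x (i - 1) r)) := by
  simp [Upsilon]

lemma upsilon_bounds (hx : IsMGTZ n mu x M) {r c i : ℕ} (h : i ∈ Upsilon n x M r c) :
    1 ≤ i ∧ i ≤ n ∧ x (i - 1) r ≤ c ∧ c ≤ x i r := by
  obtain ⟨⟨h1, h2⟩, h⟩ := mem_upsilon.1 h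
  have := gt_mono hx.1 r (Nat.sub_le i 1) h2
  refine ⟨h1, h2, ?_⟩
  rcases h with h | h <;> omega

lemma upsilon_row (hx : IsMGTZ n mu x M) (r c c' : ℕ) (hc : c < c') :
    ∀ a ∈ Upsilon n x M r c, ∀ b ∈ Upsilon n x M r c', a ≤ b := by
  intro a ha b hb
  obtain ⟨h1, h2, h3, h4⟩ := upsilon_bounds hx ha
  obtain ⟨h5, h6, h7, h8⟩ := upsilon_bounds hx hb
  by_contra hlt
  have := gt_mono hx.1 r (by omega : b ≤ a - 1) (by omega)
  omega

lemma upsilon_isSSVT (hmu : IsPartition n mu) (hx : IsMGTZ n mu x M) :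
    IsSSVT n (ShapeBox mu) (Upsilon n x M) := by
  refine ⟨?_, ?_, ?_, fun r c _ _ => upsilon_row hx r c (c + 1) (by omega), ?_⟩
  · rintro r c ⟨h1, h2, h3⟩
    have hr : r ≤ n := by
      by_contra h
      have := hmu.2.2 r (by omega)
      omega
    have hex : ∃ i, (c : ℤ) ≤ x i r := ⟨n, by rw [hx.1.2 r h1 hr]; exact_mod_cast h3⟩
    classical
    have hle : Nat.find hex ≤ n :=
      Nat.find_min' hex (by rw [hx.1.2 r h1 hr]; exact_mod_cast h3)
    have hs := Nat.find_spec hex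
    have hpos : 1 ≤ Nat.find hex := by
      by_contra h
      rw [show Nat.find hex = 0 by omega, hx.1.1.2 0 r (by omega)] at hs
      omega
    have hm := Nat.find_min hex (show Nat.find hex - 1 < Nat.find hex by omega)
    exact ⟨_, mem_upsilon.2 ⟨⟨hpos, hle⟩, Or.inl ⟨by omega, hs⟩⟩⟩
  · intro r c _ i hi
    have := upsilon_bounds hx hi
    simp only [Finset.mem_Icc]
    omega
  · intro r c hb
    rw [Finset.eq_empty_iff_forall_notMem]
    intro i hi
    obtain ⟨h1, h2, h3, h4⟩ := upsilon_bounds hx hi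
    have h5 := gt_le hx.1 (r := r) h2
    have h0 := gt_nonneg hx.1 (i - 1) r
    apply hb
    have hc : 1 ≤ c := by
      rcases (mem_upsilon.1 hi).2 with h | ⟨hM, h⟩
      · omega
      · have := hx.2 _ hM
        have := gt_nonneg hx.1 i (r + 1)
        simp only at *
        omega
    refine ⟨?_, hc, by omega⟩
    by_contra hr
    rw [hx.1.1.2 i r (by omega)] at h4
    omega
  · rintro r c ⟨hr, hc, -⟩ _ a ha b hb
    obtain ⟨h1, h2, h3, h4⟩ := upsilon_bounds hx ha
    obtain ⟨h5, h6, h7, h8⟩ := upsilon_bounds hx hb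
    by_contra hlt
    have hrb : r < b := by
      by_contra h
      rw [hx.1.1.2 b (r + 1) (by omega)] at h8
      omega
    have e1 := (hx.1.1.1 b r hr hrb h6).2
    have e2 := gt_mono hx.1 r (by omega : b - 1 ≤ a - 1) (by omega)
    have e3 := gt_mono hx.1 (r + 1) (by omega : b ≤ a) h2
    -- the inequalities force `c = x (a - 1) r`, so `a` comes from a mark, contradicting `SE > 0`
    rcases (mem_upsilon.1 ha).2 with h | ⟨hM, h⟩
    · omega
    · have := (hx.2 _ hM).2.2.2
      simp only at this
      omega

open Classical in
/-- The number of `v`'s in row `r` of `Υ(x, M)`. -/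
lemma rowOcc_upsilon (hx : IsMGTZ n mu x M) (hmu : IsPartition n mu) (r v : ℕ) (hr : 1 ≤ r)
    (h1 : 1 ≤ v) (h2 : v ≤ n) :
    (rowOcc (mu 1) (Upsilon n x M) r v : ℤ)
      = x v r - x (v - 1) r + if (v, r) ∈ M then 1 else 0 := by
  have e1 := gt_nonneg hx.1 (v - 1) r
  have e2 := gt_mono hx.1 r (Nat.sub_le v 1) h2
  have e3 := gt_le hx.1 (r := r) h2
  have e4 := part_le_one hmu r hr
  obtain ⟨a, ha⟩ := Int.eq_ofNat_of_zero_le e1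
  obtain ⟨b, hb⟩ := Int.eq_ofNat_of_zero_le (e1.trans e2)
  have hocc : rowOcc (mu 1) (Upsilon n x M) r v
      = ((Finset.Icc 1 (mu 1)).filter (fun c => v ∈ Upsilon n x M r c)).card := by
    rw [Finset.card_filter]; rfl
  have hset : (Finset.Icc 1 (mu 1)).filter (fun c => v ∈ Upsilon n x M r c)
      = if (v, r) ∈ M then insert a (Finset.Ioc a b) else Finset.Ioc a b := by
    ext c
    simp only [Finset.mem_filter, Finset.mem_Icc, mem_upsilon, ha, hb]
    split_ifs with hM
    · have := (hx.2 _ hM).2.2.2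
      have := gt_nonneg hx.1 v (r + 1)
      simp only [Finset.mem_insert, Finset.mem_Ioc, hM, true_and] at *
      omega
    · simp only [Finset.mem_Ioc, hM, false_and, or_false]
      omega
  rw [hocc, hset]
  split_ifs with hM
  · rw [Finset.card_insert_of_notMem (by simp), Nat.card_Ioc]
    omega
  · rw [Nat.card_Ioc]
    omega

end upsilon

/-! ### The preimage of a dominant contratableau -/

/-- The Gelfand–Tsetlin pattern of the preimage of `S` under `Γ`:
`x_{v,k} = N↑_{k, v-k+1} - y_{n-k+1, v-k+1}` inside the triangle and `0` outside. -/
def preX (n W : ℕ) (mu : ℕ → ℕ) (S : ℕ → ℕ → Finset ℕ) : ℕ → ℕ → ℤ :=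
  fun v k => if 1 ≤ k ∧ k ≤ v ∧ v ≤ n then
    (Nup n W mu S k (v - k + 1) : ℤ) - cntGE W S (v - k + 1) k else 0

open Classical in
/-- The marks of the preimage of `S`: `(v, k)` is marked iff `(n+1-k, v-k)` is a mark of `S`. -/
noncomputable def preM (n W : ℕ) (S : ℕ → ℕ → Finset ℕ) : Finset (ℕ × ℕ) :=
  (Finset.Icc 1 n ×ˢ Finset.Icc 1 n).filter (fun p => Marked W S (p.1 - p.2) p.2)

section preimage

variable {n : ℕ} {lam mu nu : ℕ → ℕ} {S : ℕ → ℕ → Finset ℕ}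

lemma mem_preM (hlam : IsPartition n lam) (hS : IsSVCT n lam S) (v k : ℕ) :
    (v, k) ∈ preM n (lam 1) S ↔ Marked (lam 1) S (v - k) k := by
  simp only [preM, Finset.mem_filter, Finset.mem_product, Finset.mem_Icc, and_iff_right_iff_imp]
  intro h
  have := marked_bound hlam hS h
  omega

lemma Nup_step (W : ℕ) {k j : ℕ} (hj : j ≤ n) :
    Nup n W mu S k j = Nup n W mu S k (j + 1) + rowOcc W S j k := by
  unfold Nup
  rw [← Finset.add_sum_Ioc_eq_sum_Icc hj]
  have : Finset.Ioc j n = Finset.Icc (j + 1) n := by ext; simp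
  rw [this]
  omega

/-- Horizontal step of the pattern `x`. -/
lemma preX_step (hS : IsSVCT n lam S) {v k : ℕ} (hk : 1 ≤ k) (hkv : k < v) (hv : v ≤ n) :
    preX n (lam 1) mu S v k - preX n (lam 1) mu S (v - 1) k + markInd (lam 1) S (v - k) k
      = cntGE (lam 1) S (v - k) (k + 1) - cntGE (lam 1) S (v - k + 1) k := by
  obtain ⟨j, rfl⟩ : ∃ j, v = k + 1 + j := ⟨v - k - 1, by omega⟩
  unfold preX
  rw [if_pos (by omega), if_pos (by omega)]
  have e1 : k + 1 + j - k = j + 1 := by omega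
  have e2 : k + 1 + j - 1 - k = j := by omega
  rw [e1, e2]
  have h1 := Nup_step (n := n) (mu := mu) (S := S) (lam 1) (k := k) (j := j + 1) (by omega)
  have h2 := rowOcc_contra hS (j + 1) k
  omega

/-- Diagonal step of the pattern `x`: it is the slack in the dominance inequality of `S`, plus
one if there is a mark. -/
lemma preX_diag (hS : IsSVCT n lam S) {v k : ℕ} (hk : 1 ≤ k) (hkv : k < v) (hv : v ≤ n) :
    preX n (lam 1) mu S (v - 1) k - preX n (lam 1) mu S v (k + 1)
      = (Nup n (lam 1) mu S k (v - k + 1) : ℤ) - Nup n (lam 1) mu S (k + 1) (v - k)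
        + markInd (lam 1) S (v - k) k := by
  obtain ⟨j, rfl⟩ : ∃ j, v = k + 1 + j := ⟨v - k - 1, by omega⟩
  unfold preX
  rw [if_pos (by omega), if_pos (by omega)]
  have e1 : k + 1 + j - k = j + 1 := by omega
  have e2 : k + 1 + j - 1 - k = j := by omega
  have e3 : k + 1 + j - (k + 1) = j := by omega
  rw [e1, e2, e3]
  have h1 := Nup_step (n := n) (mu := mu) (S := S) (lam 1) (k := k) (j := j + 1) (by omega)
  have h2 := rowOcc_contra hS (j + 1) k
  omega

lemma preX_bottom (hlam : IsPartition n lam) (hS : IsSVCT n lam S) {k : ℕ} (hk : 1 ≤ k)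
    (hkn : k ≤ n) : preX n (lam 1) mu S n k = mu k := by
  unfold preX
  rw [if_pos (by omega)]
  have h1 := Nup_step (n := n) (mu := mu) (S := S) (lam 1) (k := k) (j := n - k + 1) (by omega)
  have h2 := rowOcc_contra hS (n - k + 1) k
  have h3 := cntGE_eq_zero hlam hS (n - k + 1) (k + 1) (by omega)
  have h4 : markInd (lam 1) S (n - k + 1) k = 0 := by
    unfold markInd
    rw [if_neg]
    intro h
    have := marked_bound hlam hS h
    omega
  have h5 : Nup n (lam 1) mu S k (n - k + 1 + 1) = mu k := by
    unfold Nup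
    rw [Finset.sum_eq_zero, add_zero]
    intro r hr
    simp only [Finset.mem_Icc] at hr
    have h6 := rowOcc_contra hS r k
    have h7 := cntGE_eq_zero hlam hS r k (by omega)
    have h8 : markInd (lam 1) S r k = 0 := by
      unfold markInd
      rw [if_neg]
      intro h
      have := marked_bound hlam hS h
      omega
    omega
  omega

lemma pre_isMGTZ (hlam : IsPartition n lam) (hmu : IsPartition n mu) (hS : IsSVCT n lam S)
    (hSdom : LamDominant n mu (contraRowWord n (lam 1) S)) :
    IsMGTZ n mu (preX n (lam 1) mu S) (preM n (lam 1) S) := by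
  have hD : ∀ v k, 1 ≤ k → k < v → v ≤ n →
      Nup n (lam 1) mu S (k + 1) (v - k) ≤ Nup n (lam 1) mu S k (v - k + 1) :=
    fun v k hk hkv hv => Nup_le_of_lamDominant hmu S
      (fun r c c' _ h2 h3 => contra_row hS r c c' h2 h3) hSdom k (v - k) hk (by omega) (by omega)
  refine ⟨⟨⟨fun v k hk hkv hv => ⟨?_, ?_⟩, fun v k h => by simp [preX, h]⟩,
    fun k hk hkn => preX_bottom hlam hS hk hkn⟩, ?_⟩
  · have h1 := preX_step (mu := mu) hS hk hkv hv
    have h2 := cntGE_interlace hlam hS (v - k) k (by omega)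
    omega
  · have h1 := preX_diag (mu := mu) hS hk hkv hv
    have h2 := hD v k hk hkv hv
    omega
  · rintro ⟨v, k⟩ hp
    rw [mem_preM hlam hS] at hp
    have hb := marked_bound hlam hS hp
    simp only
    have hkv : k < v := by omega
    have hv : v ≤ n := by omega
    have h1 := preX_diag (mu := mu) hS hb.2.1 hkv hv
    have h2 := hD v k hb.2.1 hkv hv
    have h3 : markInd (lam 1) S (v - k) k = 1 := if_pos hp
    refine ⟨hb.2.1, hkv, hv, ?_⟩
    omega

/-- The tableau `Υ(x, M)` attached to `S`. -/
noncomputable def preT (n W : ℕ) (mu : ℕ → ℕ) (S : ℕ → ℕ → Finset ℕ) : ℕ → ℕ → Finset ℕ :=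
  Upsilon n (preX n W mu S) (preM n W S)

lemma rowOcc_preT (hlam : IsPartition n lam) (hmu : IsPartition n mu) (hS : IsSVCT n lam S)
    (hX : IsMGTZ n mu (preX n (lam 1) mu S) (preM n (lam 1) S))
    {r v : ℕ} (hr : 1 ≤ r) (hrv : r < v) (hv : v ≤ n) :
    (rowOcc (mu 1) (preT n (lam 1) mu S) r v : ℤ)
      = cntGE (lam 1) S (v - r) (r + 1) - cntGE (lam 1) S (v - r + 1) r := by
  classical
  unfold preT
  rw [rowOcc_upsilon hX hmu r v hr (by omega) hv, ← preX_step (mu := mu) hS hr hrv hv]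
  simp only [mem_preM hlam hS, markInd]
  split_ifs <;> simp

/-- `N_{v,k}(T)` for `k < v` is the entry `y_{n-k, v-k}` of the pattern of `S`. -/
lemma Ndom_preT (hlam : IsPartition n lam) (hmu : IsPartition n mu) (hS : IsSVCT n lam S)
    (hX : IsMGTZ n mu (preX n (lam 1) mu S) (preM n (lam 1) S))
    {k v : ℕ} (hkv : k < v) (hv : v ≤ n) :
    Ndom (mu 1) lam (preT n (lam 1) mu S) v k = cntGE (lam 1) S (v - k) (k + 1) := by
  induction k with
  | zero => simp [Ndom, cntGE_one hlam hS v (by omega) hv]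
  | succ k ih =>
    have h1 := ih (by omega)
    have h2 := rowOcc_preT hlam hmu hS hX (r := k + 1) (by omega) hkv hv
    rw [show v - (k + 1) + 1 = v - k by omega] at h2
    unfold Ndom at h1 ⊢
    rw [Finset.sum_Icc_succ_top (by omega)]
    omega

/-- Below the diagonal, `N_{v,k}(T)` is the full weight `nu v`. -/
lemma Ndom_preT_full (hlam : IsPartition n lam) (hmu : IsPartition n mu) (hS : IsSVCT n lam S)
    (hX : IsMGTZ n mu (preX n (lam 1) mu S) (preM n (lam 1) S))
    (hSwt : ∀ i, 1 ≤ i → i ≤ n → mu i + wtT n (lam 1) S i = nu i)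
    {k v : ℕ} (hv1 : 1 ≤ v) (hvk : v ≤ k) (hv : v ≤ n) :
    Ndom (mu 1) lam (preT n (lam 1) mu S) v k = nu v := by
  classical
  induction k, hvk using Nat.le_induction with
  | base =>
    obtain ⟨v, rfl⟩ : ∃ w, v = w + 1 := ⟨v - 1, by omega⟩
    have h1 := Ndom_preT hlam hmu hS hX (k := v) (v := v + 1) (by omega) hv
    have h2 := rowOcc_upsilon hX hmu (v + 1) (v + 1) hv1 hv1 hv
    have h3 : ((v + 1, v + 1) ∈ preM n (lam 1) S) ↔ False := by
      rw [mem_preM hlam hS, iff_false]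
      intro h
      have := marked_bound hlam hS h
      omega
    simp only [h3, if_false, Nat.add_sub_cancel] at h2
    have h4 := hX.1.1.2 v (v + 1) (by omega)
    have h5 : preX n (lam 1) mu S (v + 1) (v + 1)
        = (Nup n (lam 1) mu S (v + 1) 1 : ℤ) - cntGE (lam 1) S 1 (v + 1) := by
      unfold preX
      rw [if_pos (by omega)]
      simp
    have h6 : Nup n (lam 1) mu S (v + 1) 1 = nu (v + 1) := hSwt (v + 1) hv1 hv
    rw [show v + 1 - v = 1 by omega] at h1
    unfold Ndom at h1 ⊢
    rw [Finset.sum_Icc_succ_top (by omega)]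
    unfold preT at *
    omega
  | succ k hvk ih =>
    have h2 := rowOcc_upsilon hX hmu (k + 1) v (by omega) hv1 hv
    have h3 : ((v, k + 1) ∈ preM n (lam 1) S) ↔ False := by
      rw [mem_preM hlam hS, iff_false]
      intro h
      have := marked_bound hlam hS h
      omega
    simp only [h3, if_false] at h2
    have h4 := hX.1.1.2 v (k + 1) (by omega)
    have h5 := hX.1.1.2 (v - 1) (k + 1) (by omega)
    unfold Ndom at ih ⊢
    rw [Finset.sum_Icc_succ_top (by omega)]
    unfold preT at *
    omega

lemma Ndom_preT_gt (hlam : IsPartition n lam)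
    (hX : IsMGTZ n mu (preX n (lam 1) mu S) (preM n (lam 1) S)) {k v : ℕ} (hv : n < v) :
    Ndom (mu 1) lam (preT n (lam 1) mu S) v k = 0 := by
  unfold Ndom
  rw [hlam.2.2 v hv, Finset.sum_eq_zero, add_zero]
  intro r _
  refine Finset.sum_eq_zero fun c _ => if_neg fun h => ?_
  have := (upsilon_bounds hX h).2.1
  omega

lemma Ypat_preT (hlam : IsPartition n lam) (hmu : IsPartition n mu) (hS : IsSVCT n lam S)
    (hX : IsMGTZ n mu (preX n (lam 1) mu S) (preM n (lam 1) S))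
    {j v : ℕ} (hv : v ≤ n) :
    Ypat n (mu 1) lam (preT n (lam 1) mu S) (n - v) j = cntGE (lam 1) S j (v + 1) := by
  unfold Ypat
  split_ifs with h
  · rw [show n - (n - v) = v by omega, Ndom_preT hlam hmu hS hX (by omega) (by omega)]
    rw [show v + j - v = j by omega]
  · rcases Nat.eq_zero_or_pos j with rfl | hj
    · rw [cntGE_row_zero hS]; rfl
    · rw [cntGE_eq_zero hlam hS j (v + 1) (by omega)]; rfl

lemma mem_marksOf_preM (hlam : IsPartition n lam) (hS : IsSVCT n lam S) {j v : ℕ}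
    (hv1 : 1 ≤ v) (hv : v ≤ n) :
    (n + 1 - v, j) ∈ MarksOf n (preM n (lam 1) S) ↔ Marked (lam 1) S j v := by
  simp only [MarksOf, Finset.mem_image, Prod.exists, Prod.mk.injEq]
  constructor
  · rintro ⟨a, b, hm, h1, h2⟩
    rw [mem_preM hlam hS] at hm
    have := marked_bound hlam hS hm
    obtain rfl : b = v := by omega
    rwa [h2] at hm
  · intro hm
    refine ⟨v + j, v, ?_, rfl, by omega⟩
    rw [mem_preM hlam hS]
    rwa [show v + j - v = j by omega]

lemma omega_preT (hlam : IsPartition n lam) (hmu : IsPartition n mu) (hS : IsSVCT n lam S)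
    (hX : IsMGTZ n mu (preX n (lam 1) mu S) (preM n (lam 1) S)) :
    Omega n lam (Ypat n (mu 1) lam (preT n (lam 1) mu S)) (MarksOf n (preM n (lam 1) S)) = S := by
  funext j c
  ext v
  simp only [Omega, Finset.mem_filter, Finset.mem_Icc]
  by_cases hv : 1 ≤ v ∧ v ≤ n
  · have h1 := Ypat_preT hlam hmu hS hX (j := j) (v := v) hv.2
    have h2 := Ypat_preT hlam hmu hS hX (j := j) (v := v - 1) (by omega)
    rw [show n - (v - 1) = n + 1 - v by omega, show v - 1 + 1 = v by omega] at h2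
    rw [h1, h2, mem_marksOf_preM hlam hS hv.1 hv.2]
    by_cases hc : 1 ≤ c ∧ c ≤ lam 1
    · rw [mem_contra_iff hS j v c hc.1 hc.2]
      have e : (lam 1 : ℤ) + 1 - c = ((lam 1 + 1 - c : ℕ) : ℤ) := by omega
      rw [e]
      simp only [hv, true_and, Nat.cast_lt, Nat.cast_le, Nat.cast_inj, and_self]
    · have hE : v ∉ S j c := fun h => by
        have := mem_contraBox hS h
        unfold ContraBox at this
        omega
      have h3 := cntGE_le (S := S) (lam 1) j (v + 1)
      have h4 := cntGE_le (S := S) (lam 1) j v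
      simp only [hE, iff_false]
      rintro ⟨-, h | ⟨hm, h⟩⟩
      · omega
      · have := marked_pos hS hm
        omega
  · have hE : v ∉ S j c := fun h => by
      have := hS.2.1 j c (mem_contraBox hS h) h
      simp at this
      omega
    simp [hv, hE]

end preimage

/-- The map `Γ : SVT^lam_{nu-lam}(mu) → SVCT^mu_{nu-mu}(lam)`,
`Γ(T) = Ω(Y_T, M'_T)` (with `(x,M) = Υ⁻¹(T)`, `y_{i,j} = N_{n-i+j,n-i}` and
`M'_T = {(n+1-j,i-j) : (i,j) ∈ M}`), is surjective: every
`S ∈ SVCT^mu_{nu-mu}(lam)` is of the form `Γ(T)` for some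
`T ∈ SVT^lam_{nu-lam}(mu)`. -/
theorem gamma_surjective (n : ℕ) (hn : 0 < n) (lam mu nu : ℕ → ℕ)
    (hlam : IsPartition n lam) (hmu : IsPartition n mu) (hnu : IsPartition n nu)
    (S : ℕ → ℕ → Finset ℕ)
    (hS : IsSVCT n lam S)
    (hSdom : LamDominant n mu (contraRowWord n (lam 1) S))
    (hSwt : ∀ i, 1 ≤ i → i ≤ n → mu i + wtT n (lam 1) S i = nu i) :
    ∃ (T : ℕ → ℕ → Finset ℕ) (x : ℕ → ℕ → ℤ) (M : Finset (ℕ × ℕ)),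
      IsSSVT n (ShapeBox mu) T ∧
      LamDominant n lam (rowWordRect n (mu 1) T) ∧
      (∀ i, 1 ≤ i → i ≤ n → lam i + wtT n (mu 1) T i = nu i) ∧
      IsMGTZ n mu x M ∧ Upsilon n x M = T ∧
      Omega n lam (Ypat n (mu 1) lam T) (MarksOf n M) = S := by
  have hX := pre_isMGTZ hlam hmu hS hSdom
  refine ⟨preT n (lam 1) mu S, preX n (lam 1) mu S, preM n (lam 1) S, upsilon_isSSVT hmu hX, ?_,
    fun i h1 h2 => Ndom_preT_full hlam hmu hS hX hSwt h1 h2 h2, hX, rfl,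
    omega_preT hlam hmu hS hX⟩
  refine lamDominant_of_Ndom hlam _ n fun i k hi hk => ?_
  rcases Nat.lt_or_ge n (i + 1) with h | h
  · rw [Ndom_preT_gt hlam hX h]
    exact Nat.zero_le _
  rcases Nat.lt_or_ge k i with hki | hki
  · rw [Ndom_preT hlam hmu hS hX (by omega : k + 1 < i + 1) h,
      Ndom_preT hlam hmu hS hX hki (by omega), Nat.add_sub_add_right]
    exact cntGE_succ_le _ _ _
  · rw [Ndom_preT_full hlam hmu hS hX hSwt (by omega) (by omega) h,
      Ndom_preT_full hlam hmu hS hX hSwt hi hki (by omega)]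
    exact hnu.2.1 i hi
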